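/- Let 𝒯 be a finite set of types, τ : 𝒮 → 𝒯, and for each t ∈ 𝒯 let r_t, p_t be nonnegative integers with r_t ≤ p_t. For S ⊆ 𝒮 and t ∈ 𝒯, write S_t := {s ∈ S : τ(s) = t}, and let n be an integer with n > |𝒮|. Define the error function e_t(S) := −n·(r_t − |S_t|) if |S_t| < r_t; e_t(S) := 0 if r_t ≤ |S_t| ≤ p_t; and e_t(S) := −(|S_t| − p_t) if |S_t| > p_t. Define the soft distributional preference by: S ≿ S' iff Σ_{t ∈ 𝒯} e_t(S) ≥ Σ_{t ∈ 𝒯} e_t(S'). Then ≿ satisfies the upper-bound property, the maximizer property, and the improvement property. -/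

import Mathlib

open Finset

variable {α : Type*}

/-- Strict part of a distributional preference. -/
def strictPref (pref : Finset α → Finset α → Prop) (A B : Finset α) : Prop :=
  pref A B ∧ ¬ pref B A

/-- Indifference part of a distributional preference. -/
def indiffPref (pref : Finset α → Finset α → Prop) (A B : Finset α) : Prop :=
  pref A B ∧ pref B A

/-- Incomparability under a distributional preference. -/
def incomparable (pref : Finset α → Finset α → Prop) (A B : Finset α) : Prop :=
  ¬ pref A B ∧ ¬ pref B A

/-- `NW q S` is the collection of non-wasteful subsets of `S`. -/
def NW (q : ℕ) (S : Finset α) : Set (Finset α) :=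
  {T | T ⊆ S ∧ T.card = min q S.card}

/-- The frontier of `S`: non-wasteful subsets undominated w.r.t. the preference. -/
def frontierSet (pref : Finset α → Finset α → Prop) (q : ℕ) (S : Finset α) :
    Set (Finset α) :=
  {T | T ∈ NW q S ∧ ∀ T' ∈ NW q S, ¬ strictPref pref T' T}

/-- The upper-bound property of a distributional preference. -/
def upperBoundProperty [DecidableEq α] (pref : Finset α → Finset α → Prop) (q : ℕ) : Prop :=
  ∀ S S' : Finset α, S.card = q → S'.card = q → incomparable pref S S' →
    ∃ S'' ∈ NW q (S ∪ S'), strictPref pref S'' S ∨ strictPref pref S'' S'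

/-- The maximizer property of a distributional preference. -/
def maximizerProperty [DecidableEq α] (pref : Finset α → Finset α → Prop) (q : ℕ) : Prop :=
  ∀ S S' : Finset α, S ≠ S' → S.card = q → S'.card = q →
    (∀ S'' ∈ NW q (S ∪ S'), pref S S'' ∧ pref S' S'') →
    ∃ s ∈ S \ S', ∃ s' ∈ S' \ S,
      indiffPref pref (S.erase s ∪ {s'}) S ∧ indiffPref pref (S'.erase s' ∪ {s}) S'

/-- The improvement property of a distributional preference. -/
def improvementProperty [DecidableEq α] (pref : Finset α → Finset α → Prop) (q : ℕ) : Prop :=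
  ∀ S S' : Finset α, S.card = q → S'.card = q → ∀ s ∈ S \ S',
    (∀ S'' ∈ NW q (S ∪ S'), s ∉ S'' → strictPref pref S S'') →
    (∀ S'' ∈ NW q (S ∪ S'), s ∈ S'' → pref S S'') →
    ∃ s' ∈ S' \ S, strictPref pref (S'.erase s' ∪ {s}) S'

/-- A choice rule is non-wasteful. -/
def nonWasteful (q : ℕ) (Ch : Finset α → Finset α) : Prop :=
  ∀ S : Finset α, (Ch S).card = min q S.card

/-- A choice rule promotes the distributional preference. -/
def promotesPref (pref : Finset α → Finset α → Prop) (Ch : Finset α → Finset α) : Prop :=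
  ∀ S : Finset α, ∀ S' ⊆ S, S'.card = (Ch S).card → ¬ strictPref pref S' (Ch S)

/-- A choice rule guarantees no justified envy with respect to priority ranking `π`. -/
def noJustifiedEnvy [DecidableEq α] (pref : Finset α → Finset α → Prop)
    (π : α → α → Prop) (Ch : Finset α → Finset α) : Prop :=
  ∀ S : Finset α, ∀ s ∈ Ch S, ∀ s' ∈ S \ Ch S,
    pref ((Ch S).erase s ∪ {s'}) (Ch S) → π s s'

/-- Path independence of a choice rule. -/
def pathIndependent [DecidableEq α] (Ch : Finset α → Finset α) : Prop :=
  ∀ S S' : Finset α, Ch (S ∪ S') = Ch (Ch S ∪ S')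

/-- Consistency of a choice rule. -/
def consistentRule [DecidableEq α] (Ch : Finset α → Finset α) : Prop :=
  ∀ S : Finset α, ∀ s ∈ S, s ∉ Ch S → Ch (S.erase s) = Ch S

/-- Substitutability of a choice rule. -/
def substitutableRule [DecidableEq α] (Ch : Finset α → Finset α) : Prop :=
  ∀ S : Finset α, ∀ s ∈ S, ∀ s' ∈ S, s ≠ s' → s ∈ Ch S → s ∈ Ch (S.erase s')

/-- `l` lists the elements of `A` in strictly decreasing `π`-priority. -/
def descList [DecidableEq α] (π : α → α → Prop) (A : Finset α) (l : List α) : Prop :=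
  l.Pairwise π ∧ l.Nodup ∧ l.toFinset = A

/-- `A` priority dominates `B` with respect to `π`. -/
def priorityDominates [DecidableEq α] (π : α → α → Prop) (A B : Finset α) : Prop :=
  B.card ≤ A.card ∧
  ∀ la lb : List α, descList π A la → descList π B lb →
    ∀ (k : ℕ) (ha : k < la.length) (hb : k < lb.length),
      la.get ⟨k, ha⟩ = lb.get ⟨k, hb⟩ ∨ π (la.get ⟨k, ha⟩) (lb.get ⟨k, hb⟩)

/-- The revealed preference axiom for a choice rule: no revealed-priority cycles. -/
def revealedPrefAxiom [DecidableEq α] (pref : Finset α → Finset α → Prop)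
    (Ch : Finset α → Finset α) : Prop :=
  ¬ ∃ (K : ℕ) (s : ℕ → α) (T : ℕ → Finset α), 0 < K ∧ s K = s 0 ∧
    ∀ k < K, s k ∈ Ch (T k) ∧ s (k + 1) ∈ T k \ Ch (T k) ∧
      pref ((Ch (T k)).erase (s k) ∪ {s (k + 1)}) (Ch (T k))

/-- The error of a set `S` at type `t`, penalizing floor violations by a large
factor `n` and ceiling violations one-for-one. -/
def errFn {α β : Type*} [DecidableEq β] (τ : α → β) (r p : β → ℕ) (n : ℤ)
    (t : β) (S : Finset α) : ℤ :=
  if (S.filter fun s => τ s = t).card < r t then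
    -n * ((r t : ℤ) - ((S.filter fun s => τ s = t).card : ℤ))
  else if (S.filter fun s => τ s = t).card ≤ p t then 0
  else -(((S.filter fun s => τ s = t).card : ℤ) - (p t : ℤ))

/-- The soft distributional preference: compare total errors. -/
def softPref {α β : Type*} [Fintype β] [DecidableEq β] (τ : α → β)
    (r p : β → ℕ) (n : ℤ) (A B : Finset α) : Prop :=
  (∑ t : β, errFn τ r p n t B) ≤ ∑ t : β, errFn τ r p n t A

/-!
The soft preference compares sets by the utility `∑ t, f t |S_t|`, where each `f t` is discretely
concave. Such a utility satisfies the exchange inequality of valuated matroids: every `s ∈ S \ S'`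
can be traded against some `s' ∈ S' \ S` without lowering the sum of the utilities of `S` and `S'`.
If some `s' ∈ S' \ S` has the type of `s`, nothing changes. Otherwise `S` has more students of that
type than `S'`, hence fewer of some other type, and trading between these two types does not widen
the gap between the two counts of either type, which by concavity does not lower the sum. The
exchange inequality yields the maximizer and improvement properties: a trade that improves neither
set leaves both utilities unchanged, and any loss for `S` is a gain for `S'`.
-/

section Utility

variable {M : Type*}

/-- The preference represented by the utility `u`: a set is weakly preferred if its utility is at
least as large. -/
def utilityPref [LE M] (u : Finset α → M) (A B : Finset α) : Prop :=
  u B ≤ u A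

/-- The exchange inequality of a valuated matroid of rank `q`, for a utility `u` that is finite on
all sets of size `q`. It is the sufficient condition through which the maximizer and improvement
properties are proved. -/
def exchangeProperty [DecidableEq α] [Add M] [LE M] (u : Finset α → M) (q : ℕ) : Prop :=
  ∀ S S' : Finset α, #S = q → #S' = q → ∀ s ∈ S \ S', ∃ s' ∈ S' \ S,
    u S + u S' ≤ u (S.erase s ∪ {s'}) + u (S'.erase s' ∪ {s})

theorem strictPref_utilityPref [Preorder M] {u : Finset α → M} {A B : Finset α} :
    strictPref (utilityPref u) A B ↔ u B < u A :=
  lt_iff_le_not_ge.symm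

theorem indiffPref_utilityPref [PartialOrder M] {u : Finset α → M} {A B : Finset α} :
    indiffPref (utilityPref u) A B ↔ u A = u B :=
  and_comm.trans le_antisymm_iff.symm

theorem upperBoundProperty_utilityPref [DecidableEq α] [LinearOrder M] (u : Finset α → M) (q : ℕ) :
    upperBoundProperty (utilityPref u) q :=
  fun S S' _ _ hinc => absurd (le_total (u S') (u S)) (not_or.mpr hinc)

theorem swap_mem_NW [DecidableEq α] {S S' : Finset α} {s s' : α} (hs : s ∈ S)
    (hs' : s' ∈ S' \ S) : S.erase s ∪ {s'} ∈ NW #S (S ∪ S') := by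
  rw [mem_sdiff] at hs'
  refine ⟨union_subset_union (erase_subset s S) (singleton_subset_iff.mpr hs'.1), ?_⟩
  rw [min_eq_left (card_le_card subset_union_left), union_singleton,
    card_insert_of_notMem (mt mem_of_mem_erase hs'.2), card_erase_add_one hs]

theorem exchangeProperty.maximizerProperty [DecidableEq α] [AddCommMonoid M] [PartialOrder M]
    [IsOrderedCancelAddMonoid M] {u : Finset α → M} {q : ℕ} (hu : exchangeProperty u q) :
    maximizerProperty (utilityPref u) q := by
  rintro S S' hne rfl hS' hmax
  obtain ⟨s, hsS, hsS'⟩ : ∃ s ∈ S, s ∉ S' :=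
    not_subset.mp fun hsub => hne (eq_of_subset_of_card_le hsub hS'.le)
  have hs : s ∈ S \ S' := mem_sdiff.mpr ⟨hsS, hsS'⟩
  obtain ⟨s', hs', hexch⟩ := hu S S' rfl hS' s hs
  have hswap : u (S.erase s ∪ {s'}) ≤ u S := (hmax _ (swap_mem_NW hsS hs')).1
  have hswap' : u (S'.erase s' ∪ {s}) ≤ u S' := by
    refine (hmax _ ?_).2
    rw [← hS', union_comm S S']
    exact swap_mem_NW (mem_sdiff.mp hs').1 hs
  obtain ⟨heq, heq'⟩ := (add_le_add_iff_of_ge hswap hswap').mp hexch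
  exact ⟨s, hs, s', hs', indiffPref_utilityPref.mpr heq, indiffPref_utilityPref.mpr heq'⟩

theorem exchangeProperty.improvementProperty [DecidableEq α] [AddCommMonoid M] [LinearOrder M]
    [IsOrderedCancelAddMonoid M] {u : Finset α → M} {q : ℕ} (hu : exchangeProperty u q) :
    improvementProperty (utilityPref u) q := by
  rintro S S' rfl hS' s hs hstrict -
  obtain ⟨s', hs', hexch⟩ := hu S S' rfl hS' s hs
  have hsS : s ∈ S := (mem_sdiff.mp hs).1
  have hne : s ≠ s' := ne_of_mem_of_not_mem hsS (mem_sdiff.mp hs').2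
  have hswap : u (S.erase s ∪ {s'}) < u S :=
    strictPref_utilityPref.mp (hstrict _ (swap_mem_NW hsS hs') (by simp [hne]))
  have hswap' : u S' < u (S'.erase s' ∪ {s}) :=
    lt_of_not_ge fun hle => hexch.not_gt (add_lt_add_of_lt_of_le hswap hle)
  exact ⟨s', hs', strictPref_utilityPref.mpr hswap'⟩

end Utility

section TypeCount

variable {β : Type*} [DecidableEq β]

/-- The number `|S_t|` of students of type `t` in `S`. -/
def typeCount (τ : α → β) (S : Finset α) (t : β) : ℕ :=
  #{s ∈ S | τ s = t}

theorem sum_typeCount {τ : α → β} {S : Finset α} {T : Finset β} (hT : S.image τ ⊆ T) :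
    ∑ t ∈ T, typeCount τ S t = #S :=
  (card_eq_sum_card_fiberwise fun _ hs => hT (mem_image_of_mem τ hs)).symm

theorem exists_mem_sdiff_of_typeCount_lt [DecidableEq α] {τ : α → β} {S S' : Finset α} {t : β}
    (h : typeCount τ S t < typeCount τ S' t) : ∃ s ∈ S' \ S, τ s = t := by
  obtain ⟨s, hs', hs⟩ := exists_mem_notMem_of_card_lt_card h
  rw [mem_filter] at hs' hs
  exact ⟨s, mem_sdiff.mpr ⟨hs'.1, fun hsS => hs ⟨hsS, hs'.2⟩⟩, hs'.2⟩

theorem typeCount_lt_of_forall_sdiff_ne [DecidableEq α] {τ : α → β} {S S' : Finset α} {s : α}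
    (hs : s ∈ S \ S') (h : ∀ x ∈ S' \ S, τ s ≠ τ x) :
    typeCount τ S' (τ s) < typeCount τ S (τ s) := by
  rw [mem_sdiff] at hs
  refine card_lt_card (ssubset_iff_of_subset ?_ |>.mpr ⟨s, by simp [hs.1], by simp [hs.2]⟩)
  intro x hx
  rw [mem_filter] at hx ⊢
  exact ⟨by_contra fun hxS => h x (mem_sdiff.mpr ⟨hx.1, hxS⟩) hx.2.symm, hx.2⟩

theorem exists_typeCount_lt {τ : α → β} {S S' : Finset α} (hcard : #S ≤ #S') {t : β}
    (ht : typeCount τ S' t < typeCount τ S t) : ∃ t', typeCount τ S t' < typeCount τ S' t' := by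
  by_contra! hle
  let T := insert t (S.image τ ∪ S'.image τ)
  have hT : S.image τ ∪ S'.image τ ⊆ T := subset_insert _ _
  have hlt : ∑ t' ∈ T, typeCount τ S' t' < ∑ t' ∈ T, typeCount τ S t' :=
    sum_lt_sum (fun t' _ => hle t') ⟨t, mem_insert_self _ _, ht⟩
  rw [sum_typeCount (union_subset_right hT), sum_typeCount (union_subset_left hT)] at hlt
  exact hlt.not_ge hcard

/-- Trading `s` in `S` for `s'` in `S'` is balancing if it leaves all type counts unchanged, or
takes a student from `S` at a type where `S` has more students than `S'`, in return for one at a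
type where `S'` has more. For concave utilities of the type counts, such trades satisfy the exchange
inequality. -/
def IsBalancingTrade (τ : α → β) (S S' : Finset α) (s s' : α) : Prop :=
  τ s = τ s' ∨ (typeCount τ S' (τ s) < typeCount τ S (τ s) ∧
    typeCount τ S (τ s') < typeCount τ S' (τ s'))

theorem exists_isBalancingTrade [DecidableEq α] (τ : α → β) {S S' : Finset α}
    (hcard : #S ≤ #S') {s : α} (hs : s ∈ S \ S') : ∃ s' ∈ S' \ S, IsBalancingTrade τ S S' s s' := by
  by_cases hsame : ∃ s' ∈ S' \ S, τ s = τ s'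
  · obtain ⟨s', hs', hτ⟩ := hsame
    exact ⟨s', hs', Or.inl hτ⟩
  · push Not at hsame
    have hgt := typeCount_lt_of_forall_sdiff_ne hs hsame
    obtain ⟨t, hlt⟩ := exists_typeCount_lt hcard hgt
    obtain ⟨s', hs', rfl⟩ := exists_mem_sdiff_of_typeCount_lt hlt
    exact ⟨s', hs', Or.inr ⟨hgt, hlt⟩⟩

theorem typeCount_insert [DecidableEq α] (τ : α → β) {S : Finset α} {s : α} (hs : s ∉ S) (t : β) :
    typeCount τ (insert s S) t = typeCount τ S t + if τ s = t then 1 else 0 := by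
  simp only [typeCount, filter_insert]
  split_ifs
  · exact card_insert_of_notMem fun h => hs (mem_of_mem_filter s h)
  · rfl

theorem typeCount_swap [DecidableEq α] (τ : α → β) {S : Finset α} {s s' : α} (hs : s ∈ S)
    (hs' : s' ∉ S) (t : β) :
    typeCount τ (S.erase s ∪ {s'}) t + (if τ s = t then 1 else 0) =
      typeCount τ S t + if τ s' = t then 1 else 0 := by
  have hS := typeCount_insert τ (notMem_erase s S) t
  rw [insert_erase hs] at hS
  rw [union_singleton, typeCount_insert τ (mt mem_of_mem_erase hs'), hS]
  exact add_right_comm _ _ _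

theorem IsBalancingTrade.typeCount_swap_cases [DecidableEq α] {τ : α → β} {S S' : Finset α}
    {s s' : α} (h : IsBalancingTrade τ S S' s s') (hs : s ∈ S \ S') (hs' : s' ∈ S' \ S)
    (t : β) :
    (typeCount τ (S.erase s ∪ {s'}) t = typeCount τ S t ∧
      typeCount τ (S'.erase s' ∪ {s}) t = typeCount τ S' t) ∨
    (typeCount τ S t = typeCount τ (S.erase s ∪ {s'}) t + 1 ∧
      typeCount τ (S'.erase s' ∪ {s}) t = typeCount τ S' t + 1 ∧
      typeCount τ S' t < typeCount τ S t) ∨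
    (typeCount τ S' t = typeCount τ (S'.erase s' ∪ {s}) t + 1 ∧
      typeCount τ (S.erase s ∪ {s'}) t = typeCount τ S t + 1 ∧
      typeCount τ S t < typeCount τ S' t) := by
  rw [mem_sdiff] at hs hs'
  have hswap := typeCount_swap τ hs.1 hs'.2 t
  have hswap' := typeCount_swap τ hs'.1 hs.2 t
  rcases h with hτ | ⟨hgt, hlt⟩
  · rw [hτ] at hswap hswap'
    exact Or.inl ⟨Nat.add_right_cancel hswap, Nat.add_right_cancel hswap'⟩
  · have hne : τ s ≠ τ s' := fun hτ => (hτ ▸ hgt).asymm hlt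
    by_cases hs_t : τ s = t
    · subst hs_t
      simp only [if_true, if_neg hne.symm] at hswap hswap'
      omega
    · by_cases hs'_t : τ s' = t
      · subst hs'_t
        simp only [if_true, if_neg hne] at hswap hswap'
        omega
      · simp only [if_neg hs_t, if_neg hs'_t] at hswap hswap'
        exact Or.inl ⟨hswap, hswap'⟩

end TypeCount

section Concave

variable {β M : Type*}

/-- Discrete concavity: the increments of `f` are nonincreasing. -/
def DiscreteConcave [Sub M] [Preorder M] (f : ℕ → M) : Prop :=
  Antitone fun k => f (k + 1) - f k

theorem DiscreteConcave.succ_add_le_add_succ [AddCommGroup M] [PartialOrder M]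
    [IsOrderedAddMonoid M] {f : ℕ → M} (hf : DiscreteConcave f) {k l : ℕ} (h : k ≤ l) :
    f (l + 1) + f k ≤ f l + f (k + 1) := by
  have hincr : f (l + 1) - f l ≤ f (k + 1) - f k := hf h
  rwa [sub_le_sub_iff, add_comm (f (k + 1))] at hincr

/-- The utility of a set that adds up, over all types `t`, the value `f t |S_t|` of its number of
students of type `t`. -/
def typeUtility [Fintype β] [DecidableEq β] [AddCommMonoid M] (τ : α → β) (f : β → ℕ → M)
    (S : Finset α) : M :=
  ∑ t, f t (typeCount τ S t)

theorem IsBalancingTrade.typeUtility_add_le [DecidableEq α] [Fintype β] [DecidableEq β]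
    [AddCommGroup M] [PartialOrder M] [IsOrderedAddMonoid M] {τ : α → β} {f : β → ℕ → M}
    (hf : ∀ t, DiscreteConcave (f t)) {S S' : Finset α} {s s' : α}
    (h : IsBalancingTrade τ S S' s s') (hs : s ∈ S \ S') (hs' : s' ∈ S' \ S) :
    typeUtility τ f S + typeUtility τ f S' ≤
      typeUtility τ f (S.erase s ∪ {s'}) + typeUtility τ f (S'.erase s' ∪ {s}) := by
  simp only [typeUtility, ← sum_add_distrib]
  refine sum_le_sum fun t _ => ?_
  rcases h.typeCount_swap_cases hs hs' t with ⟨hS, hS'⟩ | ⟨hS, hS', hlt⟩ | ⟨hS', hS, hlt⟩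
  · rw [hS, hS']
  · rw [hS] at hlt ⊢
    rw [hS']
    exact (hf t).succ_add_le_add_succ (Nat.le_of_lt_succ hlt)
  · rw [hS'] at hlt ⊢
    rw [hS, add_comm (f t (typeCount τ S t)), add_comm (f t (typeCount τ S t + 1))]
    exact (hf t).succ_add_le_add_succ (Nat.le_of_lt_succ hlt)

theorem exchangeProperty_typeUtility [DecidableEq α] [Fintype β] [DecidableEq β]
    [AddCommGroup M] [PartialOrder M] [IsOrderedAddMonoid M] (τ : α → β) {f : β → ℕ → M}
    (hf : ∀ t, DiscreteConcave (f t)) (q : ℕ) : exchangeProperty (typeUtility τ f) q := by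
  intro S S' hS hS' s hs
  obtain ⟨s', hs', htrade⟩ := exists_isBalancingTrade τ (hS.trans hS'.symm).le hs
  exact ⟨s', hs', htrade.typeUtility_add_le hf hs hs'⟩

end Concave

section Soft

/-- The error `e_t` as a function of the number `k = |S_t|`, for floor `r` and ceiling `p`. -/
def softError (r p : ℕ) (n : ℤ) (k : ℕ) : ℤ :=
  if k < r then -n * ((r : ℤ) - (k : ℤ)) else if k ≤ p then 0 else -((k : ℤ) - (p : ℤ))

theorem softPref_eq_utilityPref {β : Type*} [Fintype β] [DecidableEq β] (τ : α → β) (r p : β → ℕ)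
    (n : ℤ) : softPref τ r p n = utilityPref (typeUtility τ fun t => softError (r t) (p t) n) :=
  rfl

theorem softError_succ_sub {r p : ℕ} (hrp : r ≤ p) (n : ℤ) (k : ℕ) :
    softError r p n (k + 1) - softError r p n k = if k < r then n else if k < p then 0 else -1 := by
  simp only [softError, Nat.cast_add, Nat.cast_one]
  rcases lt_or_ge k r with hk | hk
  · rcases Nat.lt_or_eq_of_le (Nat.succ_le_of_lt hk) with hk' | rfl
    · rw [if_pos hk', if_pos hk, if_pos hk]
      ring
    · simp [hrp]
  · split_ifs <;> omega

theorem discreteConcave_softError {r p : ℕ} (hrp : r ≤ p) {n : ℤ} (hn : 0 ≤ n) :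
    DiscreteConcave (softError r p n) := by
  intro k l hkl
  simp only [softError_succ_sub hrp]
  split_ifs <;> omega

end Soft

theorem stmt16_general {α β : Type*} [DecidableEq α] [Fintype β] [DecidableEq β]
    (q : ℕ) (τ : α → β) (r p : β → ℕ) (hrp : ∀ t : β, r t ≤ p t) (n : ℤ) (hn : 0 ≤ n) :
    upperBoundProperty (softPref τ r p n) q ∧
    maximizerProperty (softPref τ r p n) q ∧
    improvementProperty (softPref τ r p n) q := by
  rw [softPref_eq_utilityPref]
  have hexch := exchangeProperty_typeUtility τ (fun t => discreteConcave_softError (hrp t) hn) q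
  exact ⟨upperBoundProperty_utilityPref _ q, hexch.maximizerProperty, hexch.improvementProperty⟩

/-- The soft distributional preference defined by the error
functions satisfies the upper-bound, maximizer, and improvement properties. -/
theorem stmt16 {α β : Type*} [Fintype α] [Nonempty α] [DecidableEq α]
    [Fintype β] [DecidableEq β]
    (q : ℕ) (hq : 0 < q) (τ : α → β) (r p : β → ℕ) (hrp : ∀ t : β, r t ≤ p t)
    (n : ℤ) (hn : (Fintype.card α : ℤ) < n) :
    upperBoundProperty (softPref τ r p n) q ∧
    maximizerProperty (softPref τ r p n) q ∧
    improvementProperty (softPref τ r p n) q :=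
  stmt16_general q τ r p hrp n ((Nat.cast_nonneg _).trans hn.le)
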